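/- Let μ, δ ∈ ℝ and 0 < ρ < 1, and let e^{μ,δ}_{1,ρ}(z) = Σ_{n=0}^∞ z^n/(Γ(n+μ)·Γ(δ−ρn)). Then e^{μ,δ}_{1,ρ} is differentiable on ℝ and for every z ∈ ℝ one has ρ·z·(d/dz) e^{μ,δ}_{1,ρ}(z) = −( e^{μ,δ−1}_{1,ρ}(z) + (1−δ)·e^{μ,δ}_{1,ρ}(z) ). -/

import Mathlib

/- The Wright-type function `e^{μ,δ}_{1,ρ}(z) = Σ_{n≥0} zⁿ/(Γ(n+μ)·Γ(δ−ρn))`;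
`Real.Gamma` vanishes at nonpositive integers, realizing the convention `1/Γ = 0` there. -/
noncomputable def wrightE (ρ μ δ z : ℝ) : ℝ :=
  ∑' n : ℕ, z ^ n / (Real.Gamma ((n : ℝ) + μ) * Real.Gamma (δ - ρ * n))

/-!
Write `aₙ(δ) = 1 / (Γ(n + μ) Γ(δ - ρ n))`. The recursion `1 / Γ(s) = s / Γ(s + 1)` gives
`aₙ(δ - 1) = (δ - 1 - ρ n) aₙ(δ)`, and `z d/dz` multiplies the term of degree `n` by `n`, so the
formula is an identity of coefficients once the series may be differentiated termwise. Its radius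
of convergence is infinite: by the reflection formula `1 / |Γ(δ - ρ n)|` grows at most like
`Γ(σ n + b)` for any `σ < 1` above `ρ` and `0`, and by log-convexity of `Γ` such a factor is
negligible against `Γ(n + μ)`.
-/

open Real Filter Topology

theorem one_le_Gamma_of_two_le {s : ℝ} (hs : 2 ≤ s) : 1 ≤ Gamma s :=
  Gamma_two.symm.trans_le (Gamma_strictMonoOn_Ici.monotoneOn Set.self_mem_Ici hs hs)

theorem one_half_le_Gamma_of_pos {s : ℝ} (hs : 0 < s) : 1 / 2 ≤ Gamma s := by
  obtain ⟨x, ⟨hx1, hx2⟩, hmin⟩ := exists_isMinOn_Gamma_Ioi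
  have hx0 : 0 < x := one_pos.trans hx1
  calc 1 / 2 ≤ 1 / x := one_div_le_one_div_of_le hx0 hx2.le
    _ ≤ Gamma x := by
      rw [div_le_iff₀' hx0, ← Gamma_add_one hx0.ne']
      exact one_le_Gamma_of_two_le (by linarith)
    _ ≤ Gamma s := hmin hs

theorem inv_Gamma_eq_self_mul_inv_Gamma_add_one (s : ℝ) :
    (Gamma s)⁻¹ = s * (Gamma (s + 1))⁻¹ := by
  rcases eq_or_ne s 0 with rfl | hs
  · simp
  · rw [Gamma_add_one hs, mul_inv, mul_inv_cancel_left₀ hs]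

theorem abs_inv_Gamma_le_Gamma_one_sub {s : ℝ} (hs : s < 1) :
    |(Gamma s)⁻¹| ≤ Gamma (1 - s) := by
  have hpos : 0 < Gamma (1 - s) := Gamma_pos_of_pos (sub_pos.2 hs)
  rcases eq_or_ne (Gamma s) 0 with h0 | h0
  · simpa [h0] using hpos.le
  have hreflect := Gamma_mul_Gamma_one_sub s
  have hsin : sin (π * s) ≠ 0 := fun h =>
    mul_ne_zero h0 hpos.ne' (by rw [hreflect, h, div_zero])
  rw [abs_inv, inv_le_iff_one_le_mul₀ (abs_pos.2 h0)]
  calc 1 ≤ π / |sin (π * s)| := by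
        rw [one_le_div (abs_pos.2 hsin)]
        linarith [abs_sin_le_one (π * s), pi_gt_three]
    _ = |Gamma s * Gamma (1 - s)| := by rw [hreflect, abs_div, abs_of_pos pi_pos]
    _ = Gamma (1 - s) * |Gamma s| := by rw [abs_mul, abs_of_pos hpos, mul_comm]

-- The shift by `3` absorbs the bound `1 / Γ ≤ 2 = Γ(3)` on the positive axis.
theorem abs_inv_Gamma_le_Gamma_add_three {s b : ℝ} (hb : 0 ≤ b) (hsb : -s ≤ b) :
    |(Gamma s)⁻¹| ≤ Gamma (b + 3) := by
  have hmono {x : ℝ} (hx : 2 ≤ x) (hxb : x ≤ b + 3) : Gamma x ≤ Gamma (b + 3) :=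
    Gamma_strictMonoOn_Ici.monotoneOn hx (hx.trans hxb) hxb
  rcases lt_or_ge 0 s with hs | hs
  · calc |(Gamma s)⁻¹| = (Gamma s)⁻¹ := abs_of_pos (inv_pos.2 (Gamma_pos_of_pos hs))
      _ ≤ (1 / 2)⁻¹ := inv_anti₀ one_half_pos (one_half_le_Gamma_of_pos hs)
      _ = Gamma 3 := by norm_num [Gamma_ofNat_eq_factorial, Nat.factorial]
      _ ≤ Gamma (b + 3) := hmono (by norm_num) (by linarith)
  · have hpos : 0 < 1 - s := by linarith
    calc |(Gamma s)⁻¹| ≤ Gamma (1 - s) := abs_inv_Gamma_le_Gamma_one_sub (by linarith)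
      _ ≤ (1 - s) * Gamma (1 - s) :=
        le_mul_of_one_le_left (Gamma_pos_of_pos hpos).le (by linarith)
      _ = Gamma (1 - s + 1) := (Gamma_add_one hpos.ne').symm
      _ ≤ Gamma (b + 3) := hmono (by linarith) (by linarith)

theorem Gamma_add_le_rpow_mul_Gamma {x σ : ℝ} (hx : 0 < x) (hσ0 : 0 ≤ σ) (hσ1 : σ ≤ 1) :
    Gamma (x + σ) ≤ x ^ σ * Gamma x := by
  have hΓ := Gamma_pos_of_pos hx
  have hconv := convexOn_log_Gamma.2 (Set.mem_Ioi.2 hx) (Set.mem_Ioi.2 (by linarith : 0 < x + 1))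
    (sub_nonneg.2 hσ1) hσ0 (sub_add_cancel 1 σ)
  simp only [smul_eq_mul, Function.comp_apply] at hconv
  rw [show (1 - σ) * x + σ * (x + 1) = x + σ by ring, Gamma_add_one hx.ne',
    log_mul hx.ne' hΓ.ne'] at hconv
  rw [← log_le_log_iff (Gamma_pos_of_pos (by linarith)) (by positivity),
    log_mul (by positivity) hΓ.ne', log_rpow hx]
  linarith

theorem tendsto_Gamma_add_div_Gamma_add_one {σ : ℝ} (hσ0 : 0 ≤ σ) (hσ1 : σ < 1) :
    Tendsto (fun x : ℝ => Gamma (x + σ) / Gamma (x + 1)) atTop (𝓝 0) := by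
  refine squeeze_zero' ?_ ?_ (tendsto_rpow_neg_atTop (sub_pos.2 hσ1))
  all_goals filter_upwards [eventually_gt_atTop 0] with x hx
  · exact div_nonneg (Gamma_pos_of_pos (by linarith)).le (Gamma_pos_of_pos (by linarith)).le
  · rw [div_le_iff₀ (Gamma_pos_of_pos (by linarith)), Gamma_add_one hx.ne', ← mul_assoc,
      ← rpow_add_one hx.ne', neg_sub, sub_add_cancel]
    exact Gamma_add_le_rpow_mul_Gamma hx hσ0 hσ1.le

theorem radius_ofScalars_Gamma_div_Gamma {σ : ℝ} (hσ0 : 0 < σ) (hσ1 : σ < 1) (b μ : ℝ) :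
    (FormalMultilinearSeries.ofScalars ℝ
      fun n : ℕ => Gamma (b + σ * n) / Gamma (n + μ)).radius = ⊤ := by
  have hx : Tendsto (fun n : ℕ => b + σ * (n : ℝ)) atTop atTop :=
    tendsto_atTop_add_const_left _ _ (tendsto_natCast_atTop_atTop.const_mul_atTop hσ0)
  have hy : Tendsto (fun n : ℕ => (n : ℝ) + μ) atTop atTop :=
    tendsto_atTop_add_const_right _ _ tendsto_natCast_atTop_atTop
  have hxy : Tendsto (fun n : ℕ => (b + σ * n) / ((n : ℝ) + μ)) atTop (𝓝 σ) := by
    simpa [add_comm μ] using tendsto_add_mul_div_add_mul_atTop_nhds b μ σ one_ne_zero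
  have hratio : Tendsto (fun n : ℕ => Gamma (b + σ * n + σ) / Gamma (b + σ * n + 1) *
      ((b + σ * n) / (n + μ))) atTop (𝓝 0) := by
    simpa using ((tendsto_Gamma_add_div_Gamma_add_one hσ0.le hσ1).comp hx).mul hxy
  apply FormalMultilinearSeries.ofScalars_radius_eq_top_of_tendsto
  · filter_upwards [hx.eventually_gt_atTop 0, hy.eventually_gt_atTop 0] with n hx hy
    exact (div_pos (Gamma_pos_of_pos hx) (Gamma_pos_of_pos hy)).ne'
  · simp only [← norm_div]
    refine (tendsto_norm_zero.comp hratio).congr' ?_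
    filter_upwards [hx.eventually_gt_atTop 0, hy.eventually_gt_atTop 0] with n hx hy
    have hΓx := (Gamma_pos_of_pos hx).ne'
    have hΓy := (Gamma_pos_of_pos hy).ne'
    rw [Function.comp_apply, Nat.cast_succ, mul_add_one, ← add_assoc, add_right_comm (n : ℝ) 1 μ,
      Gamma_add_one hx.ne', Gamma_add_one hy.ne']
    field_simp [hΓx, hΓy]

theorem hasSum_nsmul_apply_diag_fderiv {𝕜 E F : Type*} [NontriviallyNormedField 𝕜]
    [NormedAddCommGroup E] [NormedSpace 𝕜 E] [NormedAddCommGroup F] [NormedSpace 𝕜 F]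
    [CompleteSpace F] {f : E → F} {p : FormalMultilinearSeries 𝕜 E F} {x y : E} {r : ENNReal}
    (hf : HasFPowerSeriesOnBall f p x r) (hy : y ∈ Metric.eball 0 r) :
    HasSum (fun n => n • p n fun _ => y) (fderiv 𝕜 f (x + y) y) := by
  have hshift : HasSum (fun n => p.derivSeries n (fun _ => y) y) (fderiv 𝕜 f (x + y) y) :=
    (hf.fderiv.hasSum hy).mapL (ContinuousLinearMap.apply 𝕜 F y)
  simp only [p.derivSeries_apply_diag] at hshift
  simpa using HasSum.zero_add (f := fun n => n • p n fun _ => y) hshift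

/-- The coefficient `1 / (Γ(n + μ) Γ(δ - ρ n))` of `zⁿ` in `wrightE ρ μ δ z`. -/
noncomputable def wrightCoeff (ρ μ δ : ℝ) (n : ℕ) : ℝ :=
  (Gamma (n + μ) * Gamma (δ - ρ * n))⁻¹

theorem wrightCoeff_sub_one (ρ μ δ : ℝ) (n : ℕ) :
    wrightCoeff ρ μ (δ - 1) n = (δ - 1 - ρ * n) * wrightCoeff ρ μ δ n := by
  have hrec := inv_Gamma_eq_self_mul_inv_Gamma_add_one (δ - 1 - ρ * n)
  rw [show δ - 1 - ρ * n + 1 = δ - ρ * n by ring] at hrec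
  rw [wrightCoeff, wrightCoeff, mul_inv, mul_inv, hrec, mul_left_comm]

theorem abs_wrightCoeff_le {ρ σ : ℝ} (hσ0 : 0 ≤ σ) (hρσ : ρ ≤ σ) (μ δ : ℝ) (n : ℕ) :
    |wrightCoeff ρ μ δ n| ≤ |Gamma (|δ| + 3 + σ * n) / Gamma (n + μ)| := by
  have hneg : -(δ - ρ * n) ≤ |δ| + σ * n := by
    have := mul_le_mul_of_nonneg_right hρσ n.cast_nonneg
    linarith [neg_abs_le δ]
  have hΓ := abs_inv_Gamma_le_Gamma_add_three (by positivity) hneg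
  rw [wrightCoeff, mul_inv_rev, abs_mul, div_eq_mul_inv, abs_mul, add_right_comm]
  exact mul_le_mul_of_nonneg_right (hΓ.trans (le_abs_self _)) (abs_nonneg _)

theorem radius_ofScalars_wrightCoeff {ρ : ℝ} (hρ : ρ < 1) (μ δ : ℝ) :
    (FormalMultilinearSeries.ofScalars ℝ (wrightCoeff ρ μ δ)).radius = ⊤ := by
  obtain ⟨σ, hσ, hσ1⟩ := exists_between (max_lt hρ one_pos)
  obtain ⟨hρσ, hσ0⟩ := max_lt_iff.1 hσ
  rw [← top_le_iff, ← radius_ofScalars_Gamma_div_Gamma hσ0 hσ1 (|δ| + 3) μ]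
  refine FormalMultilinearSeries.radius_le_of_le fun n => ?_
  simpa only [FormalMultilinearSeries.ofScalars_norm, norm_eq_abs] using
    abs_wrightCoeff_le hσ0.le hρσ.le μ δ n

theorem hasFPowerSeriesOnBall_wrightE {ρ : ℝ} (hρ : ρ < 1) (μ δ : ℝ) :
    HasFPowerSeriesOnBall (wrightE ρ μ δ)
      (FormalMultilinearSeries.ofScalars ℝ (wrightCoeff ρ μ δ)) 0 ⊤ := by
  have hradius := radius_ofScalars_wrightCoeff hρ μ δ
  have hsum : wrightE ρ μ δ = (FormalMultilinearSeries.ofScalars ℝ (wrightCoeff ρ μ δ)).sum := by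
    funext z
    simp only [wrightE, FormalMultilinearSeries.sum, FormalMultilinearSeries.ofScalars_apply_eq,
      wrightCoeff, smul_eq_mul, div_eq_inv_mul]
  rw [hsum, ← hradius]
  exact FormalMultilinearSeries.hasFPowerSeriesOnBall _ (hradius ▸ ENNReal.zero_lt_top)

theorem hasSum_wrightE {ρ : ℝ} (hρ : ρ < 1) (μ δ z : ℝ) :
    HasSum (fun n : ℕ => z ^ n * wrightCoeff ρ μ δ n) (wrightE ρ μ δ z) := by
  simpa [FormalMultilinearSeries.ofScalars_apply_eq] using
    (hasFPowerSeriesOnBall_wrightE hρ μ δ).hasSum (y := z) (by simp)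

theorem hasSum_mul_deriv_wrightE {ρ : ℝ} (hρ : ρ < 1) (μ δ z : ℝ) :
    HasSum (fun n : ℕ => n * (z ^ n * wrightCoeff ρ μ δ n)) (z * deriv (wrightE ρ μ δ) z) := by
  simpa [FormalMultilinearSeries.ofScalars_apply_eq] using
    hasSum_nsmul_apply_diag_fderiv (hasFPowerSeriesOnBall_wrightE hρ μ δ) (y := z) (by simp)

theorem wright_deriv_formula_general (μ δ ρ : ℝ) (hρ : ρ < 1) :
    Differentiable ℝ (fun z : ℝ => wrightE ρ μ δ z) ∧
    ∀ z : ℝ, ρ * z * deriv (fun w : ℝ => wrightE ρ μ δ w) z =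
      -(wrightE ρ μ (δ - 1) z + (1 - δ) * wrightE ρ μ δ z) := by
  refine ⟨fun z => ?_, fun z => ?_⟩
  · exact ((hasFPowerSeriesOnBall_wrightE hρ μ δ).analyticAt_of_mem (by simp)).differentiableAt
  · have hleft := (hasSum_mul_deriv_wrightE hρ μ δ z).mul_left ρ
    have hright := ((hasSum_wrightE hρ μ (δ - 1) z).add
      ((hasSum_wrightE hρ μ δ z).mul_left (1 - δ))).neg
    rw [mul_assoc]
    refine hleft.unique (hright.congr_fun fun n => ?_)
    rw [wrightCoeff_sub_one]
    ring

/- STATEMENT 8: first differentiation formula in (3.2):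
`ρ·z·(e^{μ,δ}_{1,ρ})′(z) = −( e^{μ,δ−1}_{1,ρ}(z) + (1−δ)·e^{μ,δ}_{1,ρ}(z) )`. -/
theorem wright_deriv_formula (μ δ ρ : ℝ) (hρ0 : 0 < ρ) (hρ1 : ρ < 1) :
    Differentiable ℝ (fun z : ℝ => wrightE ρ μ δ z) ∧
    ∀ z : ℝ, ρ * z * deriv (fun w : ℝ => wrightE ρ μ δ w) z =
      -(wrightE ρ μ (δ - 1) z + (1 - δ) * wrightE ρ μ δ z) :=
  wright_deriv_formula_general μ δ ρ hρ1
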